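/- Let a = (a_1, …, a_d) with a_i ≥ 0 for all i and a_i > 0 for at least one i, and let w ∈ ℝ with 0 < |w| < 2π/α_d. Then J(a, w) > 0. -/

import Mathlib

open Finset

/-- The Jacobian determinant of the exponential map of a corank-1 Carnot group
whose skew-symmetric matrix has nonzero singular values `α 0 ≤ … ≤ α (d-1)`,
as a function of `a i = ‖pⁱ‖²` and `w = p_z`. -/
noncomputable def Jdet (d : ℕ) (α : Fin d → ℝ) (a : Fin d → ℝ) (w : ℝ) : ℝ :=
  2 ^ (2 * d) / ((∏ i, α i) ^ 2 * w ^ (2 * d + 2)) *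
    ∑ i, a i * (∏ j ∈ univ.erase i, Real.sin (α j * w / 2) ^ 2) *
      Real.sin (α i * w / 2) *
      (Real.sin (α i * w / 2) - α i * w / 2 * Real.cos (α i * w / 2))

theorem aux_pos (x : ℝ) (h0 : 0 < x) (h1 : x < Real.pi) :
    0 < Real.sin x - x * Real.cos x := by
  have hs := Real.sin_pos_of_pos_of_lt_pi h0 h1
  rcases lt_or_ge x (Real.pi / 2) with h | h
  · have hc : 0 < Real.cos x := Real.cos_pos_of_mem_Ioo ⟨by linarith, h⟩
    have ht := Real.lt_tan h0 h
    rw [Real.tan_eq_sin_div_cos, lt_div_iff₀ hc] at ht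
    linarith
  · have hc : Real.cos x ≤ 0 :=
      Real.cos_nonpos_of_pi_div_two_le_of_le h (by linarith)
    nlinarith

theorem aux_ne (x : ℝ) (h0 : x ≠ 0) (h1 : |x| < Real.pi) :
    Real.sin x ≠ 0 ∧ 0 < Real.sin x * (Real.sin x - x * Real.cos x) := by
  suffices h : 0 < Real.sin x * (Real.sin x - x * Real.cos x) from
    ⟨fun hx => by simp [hx] at h, h⟩
  rw [abs_lt] at h1
  rcases lt_or_gt_of_ne h0 with h | h
  · have h2 := aux_pos (-x) (by linarith) (by linarith)
    have h3 := Real.sin_pos_of_pos_of_lt_pi (x := -x) (by linarith) (by linarith)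
    have := mul_pos h3 h2
    rw [Real.sin_neg, Real.cos_neg] at this
    linarith
  · exact mul_pos (Real.sin_pos_of_pos_of_lt_pi h h1.2) (aux_pos x h h1.2)

/-- Positivity of the Jacobian determinant on the cotangent injectivity domain:
if `a i ≥ 0` with some `a i > 0` and `0 < |w| < 2π / α_d`, then `J(a, w) > 0`. -/
theorem Jdet_pos (d : ℕ) (hd : 1 ≤ d) (α : Fin d → ℝ)
    (hα : ∀ i, 0 < α i) (hmono : Monotone α)
    (a : Fin d → ℝ) (ha : ∀ i, 0 ≤ a i) (ha' : ∃ i, 0 < a i)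
    (w : ℝ) (hw0 : w ≠ 0)
    (hw : |w| < 2 * Real.pi / α ⟨d - 1, Nat.sub_lt hd one_pos⟩) :
    0 < Jdet d α a w := by
  have key : ∀ i, Real.sin (α i * w / 2) ≠ 0 ∧ 0 < Real.sin (α i * w / 2) *
      (Real.sin (α i * w / 2) - α i * w / 2 * Real.cos (α i * w / 2)) := by
    intro i
    apply aux_ne
    · have := (hα i).ne'
      positivity
    · have hle : α i ≤ α ⟨d - 1, Nat.sub_lt hd one_pos⟩ := by
        apply hmono
        rw [Fin.le_def]
        have := i.2
        simp only
        omega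
      rw [lt_div_iff₀ (hα _)] at hw
      rw [abs_div, abs_mul, abs_of_pos (hα i), abs_two]
      have := mul_le_mul_of_nonneg_left hle (abs_nonneg w)
      linarith
  have hprod : ∀ i, 0 < ∏ j ∈ univ.erase i, Real.sin (α j * w / 2) ^ 2 := fun i =>
    Finset.prod_pos fun j _ => by
      have := (key j).1
      positivity
  unfold Jdet
  apply mul_pos
  · have h1 : 0 < ∏ i, α i := Finset.prod_pos fun i _ => hα i
    have h2 : 0 < w ^ (2 * d + 2) := by
      have : Even (2 * d + 2) := ⟨d + 1, by ring⟩
      exact this.pow_pos hw0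
    positivity
  · obtain ⟨k, hk⟩ := ha'
    apply Finset.sum_pos'
    · intro i _
      rw [mul_assoc]
      exact mul_nonneg (mul_nonneg (ha i) (hprod i).le) (key i).2.le
    · refine ⟨k, Finset.mem_univ k, ?_⟩
      rw [mul_assoc]
      exact mul_pos (mul_pos hk (hprod k)) (key k).2
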